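/- arXiv:1803.00109 — 3 statements merged into one kernel-verified Lean document; each statement's English description precedes it below -/
import Mathlib

section
/- Let {E_ℓ} be a Kraus family on the D×D complex matrices whose channel is faithful. If J₁ is a conserved quantity with phase λ₁ and J₂ is a conserved quantity with phase λ₂, then the product J₁J₂ satisfies ∑_ℓ E_ℓ† (J₁J₂) E_ℓ = e^{−i(λ₁+λ₂)} J₁J₂, i.e., J₁J₂ is a conserved quantity with phase λ₁ + λ₂. -/
open Matrix ComplexOrder

/-!
Let `E†(J) = c • J` with `|c| = 1`, and put `K ℓ = J * E ℓ - c • (E ℓ * J)`. The sum of the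
`(K ℓ)ᴴ * K ℓ` is the defect `E†(Jᴴ * J) - Jᴴ * J` in the Kadison–Schwarz inequality. The functional
`X ↦ tr (ρ * X)` of the invariant state is unchanged by `E†`, so it kills this defect; being
faithful, it forces every `K ℓ` to vanish. The relations `J * E ℓ = c • (E ℓ * J)` then let `J` be
pulled out of `E†(X * J)` for every `X`.
-/

theorem sum_mul_mul_mul_of_mul_eq_smul_mul {R A ι : Type*} [Fintype ι] [CommSemiring R]
    [Semiring A] [Algebra R A] {E : ι → A} {J : A} {c : R}
    (hcomm : ∀ ℓ, J * E ℓ = c • (E ℓ * J)) (F : ι → A) (X : A) :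
    ∑ ℓ, F ℓ * (X * J) * E ℓ = c • ((∑ ℓ, F ℓ * X * E ℓ) * J) := by
  simp only [Finset.sum_mul, Finset.smul_sum, mul_assoc, hcomm, mul_smul_comm]

section StarAlgebra

variable {R A ι : Type*} [Fintype ι] [CommSemiring R] [StarRing R] [Ring A] [StarRing A]
  [Algebra R A] [StarModule R A]

theorem star_mul_self_sub_smul_mul (a J : A) {c : R} (hc : c ∈ unitary R) :
    star (J * a - c • (a * J)) * (J * a - c • (a * J))
      = star a * (star J * J) * a - c • (star a * star J * a * J)
        - star c • (star J * (star a * J * a)) + star J * (star a * a) * J := by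
  simp only [star_sub, star_mul, star_smul, sub_mul, mul_sub, smul_sub, smul_mul_assoc,
    mul_smul_comm, smul_smul, mul_assoc, Unitary.mul_star_self_of_mem hc, one_smul]
  abel

theorem sum_star_mul_self_sub_smul_mul {E : ι → A} (hKraus : ∑ ℓ, star (E ℓ) * E ℓ = 1)
    {J : A} {c : R} (hc : c ∈ unitary R) (hJ : ∑ ℓ, star (E ℓ) * J * E ℓ = c • J) :
    ∑ ℓ, star (J * E ℓ - c • (E ℓ * J)) * (J * E ℓ - c • (E ℓ * J))
      = ∑ ℓ, star (E ℓ) * (star J * J) * E ℓ - star J * J := by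
  have hJstar : ∑ ℓ, star (E ℓ) * star J * E ℓ = star c • star J := by
    simpa [mul_assoc] using congrArg star hJ
  simp only [star_mul_self_sub_smul_mul _ _ hc, Finset.sum_add_distrib, Finset.sum_sub_distrib,
    ← Finset.smul_sum, ← Finset.sum_mul, ← Finset.mul_sum, hJ, hJstar, hKraus, smul_mul_assoc,
    mul_smul_comm, smul_smul, Unitary.mul_star_self_of_mem hc, Unitary.star_mul_self_of_mem hc,
    one_smul, mul_one]
  abel

theorem mul_eq_smul_mul_of_faithful_invariant {M : Type*} [AddCommGroup M] [PartialOrder M]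
    [IsOrderedAddMonoid M] {E : ι → A} (hKraus : ∑ ℓ, star (E ℓ) * E ℓ = 1)
    {φ : A →+ M} (hφ : ∀ x, x ≠ 0 → 0 < φ (star x * x))
    (hinv : ∀ x, φ (∑ ℓ, star (E ℓ) * x * E ℓ) = φ x)
    {J : A} {c : R} (hc : c ∈ unitary R) (hJ : ∑ ℓ, star (E ℓ) * J * E ℓ = c • J) (ℓ : ι) :
    J * E ℓ = c • (E ℓ * J) := by
  set K : ι → A := fun ℓ => J * E ℓ - c • (E ℓ * J)
  have hnonneg (x : A) : 0 ≤ φ (star x * x) := by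
    obtain rfl | hx := eq_or_ne x 0
    · simp
    · exact (hφ x hx).le
  have hsum : ∑ ℓ, φ (star (K ℓ) * K ℓ) = 0 := by
    rw [← map_sum, sum_star_mul_self_sub_smul_mul hKraus hc hJ, map_sub, hinv, sub_self]
  have hzero : φ (star (K ℓ) * K ℓ) = 0 :=
    (Finset.sum_eq_zero_iff_of_nonneg fun ℓ _ => hnonneg (K ℓ)).1 hsum ℓ (Finset.mem_univ ℓ)
  by_contra hne
  exact (hφ (K ℓ) (sub_ne_zero.2 hne)).ne' hzero

end StarAlgebra

theorem trace_mul_sum_mul_mul {R m n ι : Type*} [CommSemiring R] [Fintype m] [Fintype n]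
    [Fintype ι] (ρ : Matrix n n R) (X : Matrix m m R) (E : ι → Matrix m n R)
    (F : ι → Matrix n m R) :
    (ρ * ∑ ℓ, F ℓ * X * E ℓ).trace = ((∑ ℓ, E ℓ * ρ * F ℓ) * X).trace := by
  simp only [Finset.mul_sum, Finset.sum_mul, trace_sum]
  refine Finset.sum_congr rfl fun ℓ _ => ?_
  rw [← Matrix.mul_assoc, trace_mul_comm]
  simp only [Matrix.mul_assoc]

theorem trace_mul_mul_conjTranspose_pos {R m n : Type*} [Ring R] [StarRing R] [PartialOrder R]
    [IsOrderedAddMonoid R] [Fintype m] [Fintype n] {ρ : Matrix n n R} (hρ : ρ.PosDef)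
    {X : Matrix m n R} (hX : X ≠ 0) : 0 < (X * ρ * Xᴴ).trace := by
  have hdiag (i : m) : (X * ρ * Xᴴ) i i = star (star (X i)) ⬝ᵥ (ρ *ᵥ star (X i)) := by
    rw [star_star, Matrix.mul_assoc]
    rfl
  obtain ⟨i, hi⟩ : ∃ i, X i ≠ 0 := Function.ne_iff.1 hX
  refine Finset.sum_pos' (fun j _ => ?_) ⟨i, Finset.mem_univ i, ?_⟩
  · rw [diag_apply, hdiag]
    exact hρ.posSemidef.dotProduct_mulVec_nonneg _
  · rw [diag_apply, hdiag]
    exact hρ.dotProduct_mulVec_pos (star_ne_zero.2 hi)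

theorem conserved_quantity_mul_general {R n ι : Type*} [CommRing R] [StarRing R] [PartialOrder R]
    [IsOrderedAddMonoid R] [Fintype n] [DecidableEq n] [Fintype ι] (E : ι → Matrix n n R)
    (hKraus : ∑ ℓ, (E ℓ)ᴴ * E ℓ = 1)
    (hFaithful : ∃ ρ : Matrix n n R, ρ.PosDef ∧ ∑ ℓ, E ℓ * ρ * (E ℓ)ᴴ = ρ)
    (X J : Matrix n n R) {c : R} (hc : c ∈ unitary R)
    (hJ : ∑ ℓ, (E ℓ)ᴴ * J * E ℓ = c • J) :
    ∑ ℓ, (E ℓ)ᴴ * (X * J) * E ℓ = c • ((∑ ℓ, (E ℓ)ᴴ * X * E ℓ) * J) := by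
  obtain ⟨ρ, hρ, hfix⟩ := hFaithful
  let φ : Matrix n n R →+ R := (traceAddMonoidHom n R).comp (AddMonoidHom.mulLeft ρ)
  have hφ (Y : Matrix n n R) (hY : Y ≠ 0) : 0 < φ (star Y * Y) := by
    change 0 < (ρ * (Yᴴ * Y)).trace
    rw [← Matrix.mul_assoc, trace_mul_comm, ← Matrix.mul_assoc]
    exact trace_mul_mul_conjTranspose_pos hρ hY
  have hinv (Y : Matrix n n R) : φ (∑ ℓ, star (E ℓ) * Y * E ℓ) = φ Y := by
    change (ρ * ∑ ℓ, (E ℓ)ᴴ * Y * E ℓ).trace = (ρ * Y).trace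
    rw [trace_mul_sum_mul_mul, hfix]
  exact sum_mul_mul_mul_of_mul_eq_smul_mul
    (mul_eq_smul_mul_of_faithful_invariant hKraus hφ hinv hc hJ) _ X

theorem exp_neg_I_mul_ofReal_mem_unitary (x : ℝ) :
    Complex.exp (-(Complex.I * (x : ℂ))) ∈ unitary ℂ := by
  rw [Unitary.mem_iff_star_mul_self, Complex.star_def, ← Complex.exp_conj, ← Complex.exp_add]
  simp

/-- For a faithful Kraus channel, the product of a conserved quantity with
phase `λ₁` and a conserved quantity with phase `λ₂` is a conserved quantity with
phase `λ₁ + λ₂`. -/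
theorem conserved_quantity_mul
    {D : ℕ} {ι : Type*} [Fintype ι]
    (E : ι → Matrix (Fin D) (Fin D) ℂ)
    (hKraus : ∑ ℓ, (E ℓ)ᴴ * E ℓ = 1)
    (hFaithful : ∃ ρ : Matrix (Fin D) (Fin D) ℂ,
      ρ.PosDef ∧ ∑ ℓ, E ℓ * ρ * (E ℓ)ᴴ = ρ)
    (J₁ J₂ : Matrix (Fin D) (Fin D) ℂ) (lam₁ lam₂ : ℝ)
    (hJ₁ : ∑ ℓ, (E ℓ)ᴴ * J₁ * E ℓ = Complex.exp (-(Complex.I * (lam₁ : ℂ))) • J₁)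
    (hJ₂ : ∑ ℓ, (E ℓ)ᴴ * J₂ * E ℓ = Complex.exp (-(Complex.I * (lam₂ : ℂ))) • J₂) :
    ∑ ℓ, (E ℓ)ᴴ * (J₁ * J₂) * E ℓ
      = Complex.exp (-(Complex.I * ((lam₁ : ℂ) + (lam₂ : ℂ)))) • (J₁ * J₂) := by
  rw [conserved_quantity_mul_general E hKraus hFaithful J₁ J₂
    (exp_neg_I_mul_ofReal_mem_unitary lam₂) hJ₂, hJ₁, smul_mul_assoc, smul_smul,
    ← Complex.exp_add, ← neg_add, ← mul_add, add_comm (lam₂ : ℂ)]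
end

section
/- Let {E_ℓ} be a Kraus family on the D×D complex matrices whose channel is faithful, and let J be a conserved quantity with phase λ. Suppose there is a positive integer N such that J^{2N} = J^N and J^N ≠ 0. Then e^{−iNλ} = 1. -/
open Matrix ComplexOrder

/-!
For a family with `∑ ℓ, (A ℓ)ᴴ * A ℓ = 1`, the defect in the Kadison–Schwarz inequality
`(E† X)ᴴ (E† X) ≤ E† (Xᴴ X)` is the sum of the squares `(C ℓ)ᴴ (C ℓ)` with
`C ℓ = X (A ℓ) - (A ℓ) (E† X)`. A positive definite fixed point `ρ` of `E` weighs this defect by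
`tr (Xᴴ X ρ) - tr ((E† X)ᴴ (E† X) ρ)`, which vanishes when `E† X` is a unimodular multiple `w • X`.
Hence `X (A ℓ) = (A ℓ) (E† X)`, so `E†` is multiplicative on the powers of `X` and
`E† (X ^ j) = w ^ j • X ^ j`. A coincidence `X ^ (k + N) = X ^ k ≠ 0` then forces
`w ^ (k + N) = w ^ k`.
-/

section KrausMap

variable {m n ι R : Type*} [Fintype m] [Fintype ι]

section Ring

variable [Ring R] [StarRing R]

/-- The map `E†` with Kraus operators `A ℓ` in the Heisenberg picture, acting on observables. The
Kraus operators may be rectangular and need not be normalized. -/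
def krausAdjoint (A : ι → Matrix m n R) (X : Matrix m m R) : Matrix n n R :=
  ∑ ℓ, (A ℓ)ᴴ * X * A ℓ

theorem conjTranspose_krausAdjoint (A : ι → Matrix m n R) (X : Matrix m m R) :
    (krausAdjoint A X)ᴴ = krausAdjoint A Xᴴ := by
  simp only [krausAdjoint, conjTranspose_sum, conjTranspose_mul, conjTranspose_conjTranspose,
    Matrix.mul_assoc]

variable [Fintype n]

/-- The map `E` with Kraus operators `A ℓ` in the Schrödinger picture, acting on states; it is dual
to `krausAdjoint A` for the trace pairing. -/
def krausMap (A : ι → Matrix m n R) (ρ : Matrix n n R) : Matrix m m R :=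
  ∑ ℓ, A ℓ * ρ * (A ℓ)ᴴ

theorem sum_conjTranspose_mul_self_eq_krausAdjoint_sub [DecidableEq n] {A : ι → Matrix m n R}
    (hA : ∑ ℓ, (A ℓ)ᴴ * A ℓ = 1) (X : Matrix m m R) :
    ∑ ℓ, (X * A ℓ - A ℓ * krausAdjoint A X)ᴴ * (X * A ℓ - A ℓ * krausAdjoint A X) =
      krausAdjoint A (Xᴴ * X) - (krausAdjoint A X)ᴴ * krausAdjoint A X := by
  set Y := krausAdjoint A X with hY
  have expand (ℓ : ι) : (X * A ℓ - A ℓ * Y)ᴴ * (X * A ℓ - A ℓ * Y) =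
      (A ℓ)ᴴ * (Xᴴ * X) * A ℓ - (A ℓ)ᴴ * Xᴴ * A ℓ * Y - Yᴴ * ((A ℓ)ᴴ * X * A ℓ)
        + Yᴴ * ((A ℓ)ᴴ * A ℓ) * Y := by
    simp only [conjTranspose_sub, conjTranspose_mul, Matrix.sub_mul, Matrix.mul_sub,
      Matrix.mul_assoc]
    abel
  calc ∑ ℓ, (X * A ℓ - A ℓ * Y)ᴴ * (X * A ℓ - A ℓ * Y)
      = krausAdjoint A (Xᴴ * X) - krausAdjoint A Xᴴ * Y - Yᴴ * krausAdjoint A X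
          + Yᴴ * (∑ ℓ, (A ℓ)ᴴ * A ℓ) * Y := by
        simp only [expand, krausAdjoint, Finset.sum_add_distrib, Finset.sum_sub_distrib,
          Matrix.sum_mul, Matrix.mul_sum]
    _ = krausAdjoint A (Xᴴ * X) - Yᴴ * Y := by
        rw [hA, ← conjTranspose_krausAdjoint, ← hY, Matrix.mul_one]
        abel

theorem krausAdjoint_mul_of_mul_eq {A : ι → Matrix m n R} {Y : Matrix m m R}
    (hY : ∀ ℓ, Y * A ℓ = A ℓ * krausAdjoint A Y) (X : Matrix m m R) :
    krausAdjoint A (X * Y) = krausAdjoint A X * krausAdjoint A Y := by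
  calc krausAdjoint A (X * Y) = ∑ ℓ, (A ℓ)ᴴ * X * (Y * A ℓ) := by
        simp only [krausAdjoint, Matrix.mul_assoc]
    _ = krausAdjoint A X * krausAdjoint A Y := by
        simp only [hY, ← Matrix.mul_assoc, ← Matrix.sum_mul]
        rfl

theorem krausAdjoint_pow_of_mul_eq [DecidableEq n] {A : ι → Matrix n n R}
    (hA : ∑ ℓ, (A ℓ)ᴴ * A ℓ = 1) {X : Matrix n n R}
    (hX : ∀ ℓ, X * A ℓ = A ℓ * krausAdjoint A X) (k : ℕ) :
    krausAdjoint A (X ^ k) = krausAdjoint A X ^ k := by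
  induction k with
  | zero => simpa only [krausAdjoint, pow_zero, Matrix.mul_one] using hA
  | succ k ih => rw [pow_succ, krausAdjoint_mul_of_mul_eq hX, ih, pow_succ]

theorem eq_zero_of_trace_mul_posDef_mul_conjTranspose [PartialOrder R] [StarOrderedRing R]
    {ρ : Matrix n n R} (hρ : ρ.PosDef) {C : Matrix m n R} (h : (C * ρ * Cᴴ).trace = 0) :
    C = 0 := by
  have diag_eq (i : m) : (C * ρ * Cᴴ) i i = star (star (C i)) ⬝ᵥ (ρ *ᵥ star (C i)) := by
    rw [star_star, Matrix.mul_assoc]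
    rfl
  have diag_zero (i : m) : (C * ρ * Cᴴ) i i = 0 :=
    (Finset.sum_eq_zero_iff_of_nonneg fun i _ ↦
      (hρ.posSemidef.mul_mul_conjTranspose_same C).diag_nonneg).1 h i (Finset.mem_univ i)
  funext i
  by_contra hrow
  have row_pos := hρ.dotProduct_mulVec_pos (star_ne_zero.2 hrow)
  rw [← diag_eq, diag_zero] at row_pos
  exact row_pos.false

end Ring

section CommRing

variable [Fintype n] [CommRing R] [StarRing R]

theorem trace_krausAdjoint_mul (A : ι → Matrix m n R) (X : Matrix m m R) (ρ : Matrix n n R) :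
    (krausAdjoint A X * ρ).trace = (X * krausMap A ρ).trace := by
  simp only [krausAdjoint, krausMap, Matrix.sum_mul, Matrix.mul_sum, trace_sum]
  refine Finset.sum_congr rfl fun ℓ _ ↦ ?_
  rw [Matrix.mul_assoc, Matrix.mul_assoc, trace_mul_comm, Matrix.mul_assoc X]

variable [PartialOrder R] [StarOrderedRing R]

theorem eq_zero_of_trace_sum_conjTranspose_mul_self_mul_posDef {ρ : Matrix n n R} (hρ : ρ.PosDef)
    {C : ι → Matrix m n R} (h : ((∑ ℓ, (C ℓ)ᴴ * C ℓ) * ρ).trace = 0) (ℓ : ι) : C ℓ = 0 := by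
  have trace_sum_zero : ∑ ℓ, (C ℓ * ρ * (C ℓ)ᴴ).trace = 0 := by
    simpa only [Matrix.sum_mul, trace_sum, Matrix.mul_assoc, trace_mul_comm (C _)ᴴ] using h
  exact eq_zero_of_trace_mul_posDef_mul_conjTranspose hρ <|
    (Finset.sum_eq_zero_iff_of_nonneg fun ℓ _ ↦
      (hρ.posSemidef.mul_mul_conjTranspose_same (C ℓ)).trace_nonneg).1 trace_sum_zero ℓ
        (Finset.mem_univ ℓ)

theorem mul_eq_mul_krausAdjoint_of_trace_eq [DecidableEq n] {A : ι → Matrix m n R}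
    (hA : ∑ ℓ, (A ℓ)ᴴ * A ℓ = 1) {ρ : Matrix n n R} (hρ : ρ.PosDef) {X : Matrix m m R}
    (hX : ((krausAdjoint A X)ᴴ * krausAdjoint A X * ρ).trace = (Xᴴ * X * krausMap A ρ).trace)
    (ℓ : ι) : X * A ℓ = A ℓ * krausAdjoint A X := by
  refine sub_eq_zero.1 <| eq_zero_of_trace_sum_conjTranspose_mul_self_mul_posDef hρ
    (C := fun ℓ ↦ X * A ℓ - A ℓ * krausAdjoint A X) ?_ ℓ
  rw [sum_conjTranspose_mul_self_eq_krausAdjoint_sub hA, Matrix.sub_mul, trace_sub,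
    trace_krausAdjoint_mul, hX, sub_self]

theorem krausAdjoint_pow_of_krausAdjoint_eq_smul [DecidableEq n] {A : ι → Matrix n n R}
    (hA : ∑ ℓ, (A ℓ)ᴴ * A ℓ = 1) {ρ : Matrix n n R} (hρ : ρ.PosDef) (hfix : krausMap A ρ = ρ)
    {J : Matrix n n R} {w : R} (hw : star w * w = 1) (hJ : krausAdjoint A J = w • J) (k : ℕ) :
    krausAdjoint A (J ^ k) = w ^ k • J ^ k := by
  have norm_eq : (krausAdjoint A J)ᴴ * krausAdjoint A J = Jᴴ * J := by
    rw [hJ, conjTranspose_smul, Matrix.smul_mul, Matrix.mul_smul, smul_smul, hw, one_smul]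
  have intertwines (ℓ : ι) : J * A ℓ = A ℓ * krausAdjoint A J :=
    mul_eq_mul_krausAdjoint_of_trace_eq hA hρ (by rw [norm_eq, hfix]) ℓ
  rw [krausAdjoint_pow_of_mul_eq hA intertwines, hJ, smul_pow]

theorem phase_root_of_unity_of_power_projection_general [NoZeroDivisors R] [DecidableEq n]
    {A : ι → Matrix n n R} (hA : ∑ ℓ, (A ℓ)ᴴ * A ℓ = 1)
    (hfaithful : ∃ ρ : Matrix n n R, ρ.PosDef ∧ krausMap A ρ = ρ)
    {J : Matrix n n R} {w : R} (hw : star w * w = 1) (hJ : krausAdjoint A J = w • J)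
    {k N : ℕ} (hperiod : J ^ (k + N) = J ^ k) (hne : J ^ k ≠ 0) : w ^ N = 1 := by
  obtain ⟨ρ, hρ, hfix⟩ := hfaithful
  have eigen := krausAdjoint_pow_of_krausAdjoint_eq_smul hA hρ hfix hw hJ
  have smul_eq : w ^ (k + N) • J ^ k = w ^ k • J ^ k := by
    rw [← eigen k, ← hperiod, eigen (k + N)]
  have pow_eq : w ^ k * w ^ N = w ^ k * 1 := by
    rw [← pow_add, mul_one]
    exact smul_left_injective R hne smul_eq
  exact ((IsUnit.of_mul_eq_one_right _ hw).pow k).mul_left_cancel pow_eq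

end CommRing

end KrausMap

/-- If a conserved quantity `J` with phase `λ` of a faithful Kraus channel
satisfies `J^(2N) = J^N ≠ 0` for some positive integer `N`, then `e^{-iNλ} = 1`. -/
theorem phase_root_of_unity_of_power_projection
    {D : ℕ} {ι : Type*} [Fintype ι]
    (E : ι → Matrix (Fin D) (Fin D) ℂ)
    (hKraus : ∑ ℓ, (E ℓ)ᴴ * E ℓ = 1)
    (hFaithful : ∃ ρ : Matrix (Fin D) (Fin D) ℂ,
      ρ.PosDef ∧ ∑ ℓ, E ℓ * ρ * (E ℓ)ᴴ = ρ)
    (J : Matrix (Fin D) (Fin D) ℂ) (lam : ℝ)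
    (hJ : ∑ ℓ, (E ℓ)ᴴ * J * E ℓ = Complex.exp (-(Complex.I * (lam : ℂ))) • J)
    (N : ℕ) (hN : 0 < N) (hproj : J ^ (2 * N) = J ^ N) (hne : J ^ N ≠ 0) :
    Complex.exp (-(Complex.I * ((N : ℂ) * (lam : ℂ)))) = 1 := by
  rw [mul_left_comm, ← mul_neg, Complex.exp_nat_mul]
  exact phase_root_of_unity_of_power_projection_general hKraus hFaithful
    (by simp [← Complex.exp_conj, ← Complex.exp_add]) hJ (two_mul N ▸ hproj) hne
end

section
/- Let {E_ℓ} be a Kraus family on the d₁×d₁ complex matrices whose channel is faithful, let {C_ℓ} be d₁×d₂ and {D_ℓ} be d₂×d₂ complex matrices (over the same finite index set) with ∑_ℓ E_ℓ† C_ℓ = 0 and ∑_ℓ (C_ℓ† C_ℓ + D_ℓ† D_ℓ) = I_{d₂}, and form the block upper-triangular Kraus family A_ℓ = [[E_ℓ, C_ℓ],[0, D_ℓ]] on the (d₁+d₂)×(d₁+d₂) matrices. Let λ ∈ ℝ and suppose the linear map X ↦ ∑_ℓ E_ℓ† X D_ℓ on d₁×d₂ matrices and the linear map Y ↦ ∑_ℓ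 D_ℓ† Y E_ℓ on d₂×d₁ matrices each have no eigenvalue equal to e^{−iλ}. If a (d₁+d₂)×(d₁+d₂) matrix J = [[J₁₁, J₁₂],[J₂₁, J₂₂]] satisfies ∑_ℓ A_ℓ† J A_ℓ = e^{−iλ} J, then its off-diagonal blocks vanish: J₁₂ = 0 and J₂₁ = 0. -/
open Matrix ComplexOrder

/-!
Let `ρ` be a faithful fixed state of the channel with Kraus operators `E ℓ`, and let `J` satisfy
`∑ ℓ, (E ℓ)ᴴ * J * E ℓ = w • J` with `|w| ≥ 1`. With `K ℓ = J * E ℓ - w • (E ℓ * J)`,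
`∑ ℓ, (K ℓ)ᴴ * K ℓ = ∑ ℓ, (E ℓ)ᴴ * (Jᴴ * J) * E ℓ - |w|² • (Jᴴ * J)`.
The state `X ↦ tr (ρ X)` is invariant under the adjoint channel, so it sends the right-hand side to
`(1 - |w|²) tr (ρ Jᴴ J) ≤ 0`, and its faithfulness forces `K ℓ = 0`: `J` commutes with every Kraus
operator up to the factor `w`. Applied to `J₁₁` and its adjoint, this lets the orthogonality
`∑ ℓ, (E ℓ)ᴴ * C ℓ = 0` kill the terms coupling `J₁₁` to `J₁₂` and `J₂₁`, which would therefore be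
eigenvectors of the two off-diagonal superoperators for the excluded eigenvalue.
-/

section StarAlgebra

variable {R A ι : Type*} [CommRing R] [StarRing R] [Ring A] [StarRing A] [Algebra R A]
  [StarModule R A] [Fintype ι] {E : ι → A} {w : R} {J : A}

theorem sum_star_mul_star_mul_eq_smul (hJ : ∑ ℓ, star (E ℓ) * J * E ℓ = w • J) :
    ∑ ℓ, star (E ℓ) * star J * E ℓ = star w • star J := by
  simpa [star_sum, mul_assoc] using congrArg star hJ

theorem sum_star_mul_self_twisted_commutator (hE : ∑ ℓ, star (E ℓ) * E ℓ = 1)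
    (hJ : ∑ ℓ, star (E ℓ) * J * E ℓ = w • J) :
    ∑ ℓ, star (J * E ℓ - w • (E ℓ * J)) * (J * E ℓ - w • (E ℓ * J)) =
      ∑ ℓ, star (E ℓ) * (star J * J) * E ℓ - (star w * w) • (star J * J) := by
  have expand (ℓ : ι) :
      star (J * E ℓ - w • (E ℓ * J)) * (J * E ℓ - w • (E ℓ * J)) =
        star (E ℓ) * (star J * J) * E ℓ - w • (star (E ℓ) * star J * E ℓ * J)
          - star w • (star J * (star (E ℓ) * J * E ℓ))
          + (star w * w) • (star J * (star (E ℓ) * E ℓ) * J) := by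
    simp only [star_sub, star_smul, star_mul, sub_mul, mul_sub, smul_mul_assoc, mul_smul_comm,
      mul_assoc, smul_sub, smul_smul, mul_comm w]
    abel
  simp only [expand, Finset.sum_add_distrib, Finset.sum_sub_distrib, ← Finset.smul_sum,
    ← Finset.sum_mul, ← Finset.mul_sum, sum_star_mul_star_mul_eq_smul hJ, hJ, hE,
    smul_mul_assoc, mul_smul_comm, smul_smul, mul_comm w, mul_one]
  abel

variable [PartialOrder R] [IsOrderedRing R]

theorem mul_eq_smul_mul_of_faithful_invariant_s11 {φ : A →ₗ[R] R}
    (hφ_pos : ∀ x, x ≠ 0 → 0 < φ (star x * x))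
    (hφ_inv : ∀ x, φ (∑ ℓ, star (E ℓ) * x * E ℓ) = φ x)
    (hE : ∑ ℓ, star (E ℓ) * E ℓ = 1) (hw : 1 ≤ star w * w)
    (hJ : ∑ ℓ, star (E ℓ) * J * E ℓ = w • J) (ℓ : ι) :
    J * E ℓ = w • (E ℓ * J) := by
  have hφ_nonneg (x : A) : 0 ≤ φ (star x * x) := by
    obtain rfl | hx := eq_or_ne x 0
    · simp
    · exact (hφ_pos x hx).le
  set K : ι → A := fun ℓ => J * E ℓ - w • (E ℓ * J)
  have sum_nonpos : ∑ ℓ, φ (star (K ℓ) * K ℓ) ≤ 0 :=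
    calc ∑ ℓ, φ (star (K ℓ) * K ℓ)
      _ = φ (star J * J) - (star w * w) * φ (star J * J) := by
        rw [← map_sum, sum_star_mul_self_twisted_commutator hE hJ, map_sub, hφ_inv, map_smul,
          smul_eq_mul]
      _ ≤ 0 := sub_nonpos.2 (le_mul_of_one_le_left (hφ_nonneg J) hw)
  have sum_eq_zero : ∑ ℓ, φ (star (K ℓ) * K ℓ) = 0 :=
    sum_nonpos.antisymm (Finset.sum_nonneg fun ℓ _ => hφ_nonneg (K ℓ))
  have term_eq_zero : φ (star (K ℓ) * K ℓ) = 0 :=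
    (Finset.sum_eq_zero_iff_of_nonneg fun ℓ _ => hφ_nonneg (K ℓ)).1 sum_eq_zero ℓ
      (Finset.mem_univ ℓ)
  have commutator_eq_zero : K ℓ = 0 := by
    by_contra hne
    exact (hφ_pos (K ℓ) hne).ne' term_eq_zero
  exact sub_eq_zero.1 commutator_eq_zero

end StarAlgebra

section KrausFamily

variable {R m n ι : Type*}

theorem sum_fromBlocks {p q : Type*} [AddCommMonoid R] (s : Finset ι)
    (A : ι → Matrix m p R) (B : ι → Matrix m q R) (C : ι → Matrix n p R)
    (D : ι → Matrix n q R) :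
    ∑ i ∈ s, fromBlocks (A i) (B i) (C i) (D i) =
      fromBlocks (∑ i ∈ s, A i) (∑ i ∈ s, B i) (∑ i ∈ s, C i) (∑ i ∈ s, D i) := by
  ext (_ | _) (_ | _) <;> simp [Matrix.sum_apply]

variable [CommRing R] [Fintype m]

theorem trace_mul_sum_conjTranspose_mul_mul [StarRing R] [Fintype ι] (E : ι → Matrix m m R)
    (ρ X : Matrix m m R) :
    (ρ * ∑ ℓ, (E ℓ)ᴴ * X * E ℓ).trace = ((∑ ℓ, E ℓ * ρ * (E ℓ)ᴴ) * X).trace := by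
  simp only [Matrix.mul_sum, Matrix.sum_mul, trace_sum]
  refine Finset.sum_congr rfl fun ℓ _ => ?_
  rw [← Matrix.mul_assoc, trace_mul_comm]
  simp only [Matrix.mul_assoc]

variable [PartialOrder R] [IsOrderedRing R] [StarRing R]

theorem trace_mul_conjTranspose_mul_self_pos {ρ : Matrix m m R} (hρ : ρ.PosDef)
    {K : Matrix n m R} [Fintype n] (hK : K ≠ 0) : 0 < (ρ * (Kᴴ * K)).trace := by
  have diag_eq (i : n) : (K * ρ * Kᴴ) i i = star (star (K i)) ⬝ᵥ ρ *ᵥ star (K i) := by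
    rw [star_star, dotProduct_mulVec]
    rfl
  obtain ⟨i, hi⟩ : ∃ i, K i ≠ 0 := Function.ne_iff.1 hK
  rw [← Matrix.mul_assoc, trace_mul_comm, ← Matrix.mul_assoc]
  refine Finset.sum_pos' (fun j _ => ?_) ⟨i, Finset.mem_univ i, ?_⟩
  · exact (hρ.posSemidef.mul_mul_conjTranspose_same K).diag_nonneg
  · rw [diag_apply, diag_eq]
    exact hρ.dotProduct_mulVec_pos (star_ne_zero.2 hi)

variable [DecidableEq m] [Fintype ι] {E : ι → Matrix m m R} {ρ J : Matrix m m R} {w : R}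
  {C : ι → Matrix m n R}

theorem mul_kraus_eq_smul_kraus_mul (hE : ∑ ℓ, (E ℓ)ᴴ * E ℓ = 1) (hρ : ρ.PosDef)
    (hfix : ∑ ℓ, E ℓ * ρ * (E ℓ)ᴴ = ρ) (hw : 1 ≤ star w * w)
    (hJ : ∑ ℓ, (E ℓ)ᴴ * J * E ℓ = w • J) (ℓ : ι) :
    J * E ℓ = w • (E ℓ * J) :=
  mul_eq_smul_mul_of_faithful_invariant_s11 (φ := traceLinearMap m R R ∘ₗ LinearMap.mulLeft R ρ)
    (fun _ hX => trace_mul_conjTranspose_mul_self_pos hρ hX)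
    (fun X => (trace_mul_sum_conjTranspose_mul_mul E ρ X).trans (by rw [hfix]; rfl)) hE hw hJ ℓ

theorem sum_conjTranspose_mul_mul_kraus_eq_zero (hE : ∑ ℓ, (E ℓ)ᴴ * E ℓ = 1) (hρ : ρ.PosDef)
    (hfix : ∑ ℓ, E ℓ * ρ * (E ℓ)ᴴ = ρ) (hw : 1 ≤ star w * w)
    (hJ : ∑ ℓ, (E ℓ)ᴴ * J * E ℓ = w • J) (hC : ∑ ℓ, (E ℓ)ᴴ * C ℓ = 0) :
    ∑ ℓ, (C ℓ)ᴴ * J * E ℓ = 0 := by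
  have hC' : ∑ ℓ, (C ℓ)ᴴ * E ℓ = 0 := by
    simpa [conjTranspose_sum] using congrArg conjTranspose hC
  calc ∑ ℓ, (C ℓ)ᴴ * J * E ℓ
    _ = ∑ ℓ, w • ((C ℓ)ᴴ * E ℓ * J) := by
      simp only [Matrix.mul_assoc, mul_kraus_eq_smul_kraus_mul hE hρ hfix hw hJ, Matrix.mul_smul]
    _ = w • ((∑ ℓ, (C ℓ)ᴴ * E ℓ) * J) := by rw [← Finset.smul_sum, Matrix.sum_mul]
    _ = 0 := by rw [hC', Matrix.zero_mul, smul_zero]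

theorem sum_kraus_conjTranspose_mul_mul_eq_zero (hE : ∑ ℓ, (E ℓ)ᴴ * E ℓ = 1) (hρ : ρ.PosDef)
    (hfix : ∑ ℓ, E ℓ * ρ * (E ℓ)ᴴ = ρ) (hw : 1 ≤ star w * w)
    (hJ : ∑ ℓ, (E ℓ)ᴴ * J * E ℓ = w • J) (hC : ∑ ℓ, (E ℓ)ᴴ * C ℓ = 0) :
    ∑ ℓ, (E ℓ)ᴴ * J * C ℓ = 0 := by
  have hJ_adj : ∑ ℓ, (E ℓ)ᴴ * Jᴴ * E ℓ = star w • Jᴴ := sum_star_mul_star_mul_eq_smul hJ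
  have hw_adj : 1 ≤ star (star w) * star w := by rwa [star_star, mul_comm]
  have adjoint_eq_zero := sum_conjTranspose_mul_mul_kraus_eq_zero hE hρ hfix hw_adj hJ_adj hC
  simpa [conjTranspose_sum, Matrix.mul_assoc] using congrArg conjTranspose adjoint_eq_zero

theorem conserved_quantity_offdiagonal_blocks_vanish_general [Fintype n]
    (hE : ∑ ℓ, (E ℓ)ᴴ * E ℓ = 1)
    (hfaithful : ∃ ρ : Matrix m m R, ρ.PosDef ∧ ∑ ℓ, E ℓ * ρ * (E ℓ)ᴴ = ρ)
    (hC : ∑ ℓ, (E ℓ)ᴴ * C ℓ = 0) {D : ι → Matrix n n R} (hw : 1 ≤ star w * w)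
    (h_upper : ∀ X : Matrix m n R, ∑ ℓ, (E ℓ)ᴴ * X * D ℓ = w • X → X = 0)
    (h_lower : ∀ Y : Matrix n m R, ∑ ℓ, (D ℓ)ᴴ * Y * E ℓ = w • Y → Y = 0)
    {J₁₁ : Matrix m m R} {J₁₂ : Matrix m n R} {J₂₁ : Matrix n m R} {J₂₂ : Matrix n n R}
    (hJ : ∑ ℓ, (fromBlocks (E ℓ) (C ℓ) 0 (D ℓ))ᴴ * fromBlocks J₁₁ J₁₂ J₂₁ J₂₂ *
        fromBlocks (E ℓ) (C ℓ) 0 (D ℓ) = w • fromBlocks J₁₁ J₁₂ J₂₁ J₂₂) :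
    J₁₂ = 0 ∧ J₂₁ = 0 := by
  obtain ⟨ρ, hρ, hfix⟩ := hfaithful
  simp only [fromBlocks_conjTranspose, fromBlocks_multiply, fromBlocks_smul, conjTranspose_zero,
    Matrix.zero_mul, Matrix.mul_zero, add_zero, Matrix.add_mul, sum_fromBlocks, fromBlocks_inj,
    Finset.sum_add_distrib] at hJ
  obtain ⟨h₁₁, h₁₂, h₂₁, -⟩ := hJ
  rw [sum_kraus_conjTranspose_mul_mul_eq_zero hE hρ hfix hw h₁₁ hC, zero_add] at h₁₂
  rw [sum_conjTranspose_mul_mul_kraus_eq_zero hE hρ hfix hw h₁₁ hC, zero_add] at h₂₁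
  exact ⟨h_upper J₁₂ h₁₂, h_lower J₂₁ h₂₁⟩

end KrausFamily

/-- For an extended channel `Aℓ = [[Eℓ, Cℓ], [0, Dℓ]]` whose off-diagonal
superoperator blocks `X ↦ ∑ ℓ, Eℓᴴ X Dℓ` and `Y ↦ ∑ ℓ, Dℓᴴ Y Eℓ` have no eigenvalue `e^{-iλ}`,
any conserved quantity `J` with phase `λ` has vanishing off-diagonal blocks. -/
theorem conserved_quantity_offdiagonal_blocks_vanish
    {d₁ d₂ : ℕ} {ι : Type*} [Fintype ι]
    (E : ι → Matrix (Fin d₁) (Fin d₁) ℂ)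
    (hKraus : ∑ ℓ, (E ℓ)ᴴ * E ℓ = 1)
    (hFaithful : ∃ ρ : Matrix (Fin d₁) (Fin d₁) ℂ,
      ρ.PosDef ∧ ∑ ℓ, E ℓ * ρ * (E ℓ)ᴴ = ρ)
    (C : ι → Matrix (Fin d₁) (Fin d₂) ℂ)
    (Dm : ι → Matrix (Fin d₂) (Fin d₂) ℂ)
    (hC : ∑ ℓ, (E ℓ)ᴴ * C ℓ = 0)
    (hQ : ∑ ℓ, ((C ℓ)ᴴ * C ℓ + (Dm ℓ)ᴴ * Dm ℓ) = 1)
    (lam : ℝ)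
    (hur : ∀ X : Matrix (Fin d₁) (Fin d₂) ℂ,
      (∑ ℓ, (E ℓ)ᴴ * X * Dm ℓ) = Complex.exp (-(Complex.I * (lam : ℂ))) • X → X = 0)
    (hll : ∀ Y : Matrix (Fin d₂) (Fin d₁) ℂ,
      (∑ ℓ, (Dm ℓ)ᴴ * Y * E ℓ) = Complex.exp (-(Complex.I * (lam : ℂ))) • Y → Y = 0)
    (J₁₁ : Matrix (Fin d₁) (Fin d₁) ℂ) (J₁₂ : Matrix (Fin d₁) (Fin d₂) ℂ)
    (J₂₁ : Matrix (Fin d₂) (Fin d₁) ℂ) (J₂₂ : Matrix (Fin d₂) (Fin d₂) ℂ)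
    (hJ : ∑ ℓ, (Matrix.fromBlocks (E ℓ) (C ℓ) 0 (Dm ℓ))ᴴ
        * Matrix.fromBlocks J₁₁ J₁₂ J₂₁ J₂₂
        * Matrix.fromBlocks (E ℓ) (C ℓ) 0 (Dm ℓ)
      = Complex.exp (-(Complex.I * (lam : ℂ))) • Matrix.fromBlocks J₁₁ J₁₂ J₂₁ J₂₂) :
    J₁₂ = 0 ∧ J₂₁ = 0 := by
  have hphase : 1 ≤ star (Complex.exp (-(Complex.I * lam))) * Complex.exp (-(Complex.I * lam)) := by
    simp [← Complex.exp_conj, ← Complex.exp_add]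
  exact conserved_quantity_offdiagonal_blocks_vanish_general hKraus hFaithful hC hphase hur hll hJ
end
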